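/- Let ε ∈ (0,1/2), let H be a complex Hilbert space, and let M be a self-adjoint bounded operator on H with M ≥ c·1 for some c > 0. Then the function z ↦ Tr[M z²(1+z)^{-1}] is strictly convex on the convex set S_ε := {z : z is a self-adjoint Hilbert–Schmidt operator with z ≥ −ε·1}; that is, for z ≠ z' in S_ε and λ ∈ (0,1), Tr[M (λz + (1−λ)z')²(1 + λz + (1−λ)z')^{-1}] < λ Tr[M z²(1+z)^{-1}] + (1−λ) Tr[M z'²(1+z')^{-1}]. -/

import Mathlib

set_option synthInstance.maxHeartbeats 1000000
set_option maxHeartbeats 1000000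

open scoped InnerProductSpace

section TraceSetup

variable (H : Type*) [NormedAddCommGroup H] [InnerProductSpace ℂ H] [CompleteSpace H]

/-- A fixed Hilbert basis of `H`, used to define the trace. -/
noncomputable def traceBasis : HilbertBasis (exists_hilbertBasis ℂ H).choose ℂ H :=
  (exists_hilbertBasis ℂ H).choose_spec.choose

variable {H}

/-- The diagonal of an operator with respect to the chosen Hilbert basis. -/
noncomputable def opDiag (A : H →L[ℂ] H) (i : (exists_hilbertBasis ℂ H).choose) : ℝ :=
  (⟪traceBasis H i, A (traceBasis H i)⟫_ℂ).re

/-- The trace of an operator: the sum of its diagonal with respect to the chosen Hilbert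
basis.  For a trace-class operator this agrees with the usual trace. -/
noncomputable def opTrace (A : H →L[ℂ] H) : ℝ := ∑' i, opDiag A i

/-- An operator is a positive trace-class operator iff it is positive (for the Loewner order,
i.e. self-adjoint with nonnegative quadratic form) and its diagonal is summable. -/
def IsPosTraceClass (A : H →L[ℂ] H) : Prop := 0 ≤ A ∧ Summable (opDiag A)

/-- `A` is Hilbert–Schmidt iff `A* A` has finite trace. -/
def IsHilbertSchmidt (A : H →L[ℂ] H) : Prop := Summable (opDiag (star A * A))

/-- The Hilbert–Schmidt norm `‖A‖_HS = (Tr[A* A])^{1/2}`. -/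
noncomputable def hsNorm (A : H →L[ℂ] H) : ℝ := Real.sqrt (opTrace (star A * A))

end TraceSetup

/-!
Since `z² (1 + z)⁻¹ = z - 1 + (1 + z)⁻¹`, the integrand inherits strict operator convexity from
inversion of strictly positive elements of a C⋆-algebra. Inversion is operator convex, and the
identity `(s a + t b) (s a⁻¹ + t b⁻¹) a = (s + t)² a + s t (a - b) b⁻¹ (a - b)` shows that equality
forces `(a - b) b⁻¹ (a - b) = 0`, hence `a = b`. The convexity defect `T` is therefore a nonzero
positive trace-class operator. Writing `M = K⋆ K` and `T = S⋆ S` with `S` Hilbert–Schmidt,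
cyclicity gives `Tr[M T] = Tr[(S K⋆)⋆ (S K⋆)]`, which is positive because `M T ≠ 0` when `M` is
injective.
-/

section RingInverse

variable {R : Type*} [Ring R]

lemma sq_mul_ringInverse_one_add {z : R} (hz : IsUnit (1 + z)) :
    z ^ 2 * Ring.inverse (1 + z) = z - 1 + Ring.inverse (1 + z) := by
  have factor : z ^ 2 = (z - 1) * (1 + z) + 1 := by noncomm_ring
  rw [factor, add_mul, one_mul, Ring.mul_inverse_cancel_right _ _ hz]

lemma smul_add_smul_mul_smul_ringInverse_add_mul {𝕜 : Type*} [CommRing 𝕜] [Algebra 𝕜 R] {a b : R}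
    (ha : IsUnit a) (hb : IsUnit b) (s t : 𝕜) :
    (s • a + t • b) * (s • Ring.inverse a + t • Ring.inverse b) * a
      = (s + t) ^ 2 • a + (s * t) • ((a - b) * Ring.inverse b * (a - b)) := by
  simp only [mul_add, add_mul, mul_sub, sub_mul, smul_mul_assoc, mul_smul_comm, mul_assoc,
    Ring.inverse_mul_cancel a ha, Ring.mul_inverse_cancel_left b _ hb,
    Ring.inverse_mul_cancel b hb, mul_one]
  module

end RingInverse

section CStarAlgebra

variable {A : Type*} [CStarAlgebra A] [PartialOrder A] [StarOrderedRing A]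

lemma eq_zero_of_star_mul_mul_eq_zero {p x : A} (hp : IsStrictlyPositive p)
    (h : star x * p * x = 0) : x = 0 := by
  have hsqrt : star (CFC.sqrt p * x) * (CFC.sqrt p * x) = star x * p * x := by
    rw [star_mul, (CFC.sqrt_nonneg p).isSelfAdjoint.star_eq, mul_assoc,
      ← mul_assoc (CFC.sqrt p), CFC.sqrt_mul_sqrt_self p hp.nonneg, mul_assoc]
  rw [h, CStarRing.star_mul_self_eq_zero_iff] at hsqrt
  exact (hp.isUnit_cfcSqrt p).mul_right_eq_zero.1 hsqrt

lemma strictConvexOn_ringInverse :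
    StrictConvexOn ℝ {a : A | IsStrictlyPositive a} Ring.inverse := by
  refine ⟨CStarAlgebra.convexOn_ringInverse.1, fun a ha b hb hab s t hs ht hst => ?_⟩
  have hle := CStarAlgebra.convexOn_ringInverse.2 ha hb hs.le ht.le hst
  refine lt_of_le_of_ne hle fun heq => hab ?_
  have hc : IsUnit (s • a + t • b) :=
    (CStarAlgebra.convexOn_ringInverse.1 ha hb hs.le ht.le hst).isUnit
  have hsq := smul_add_smul_mul_smul_ringInverse_add_mul ha.isUnit hb.isUnit s t
  rw [← heq, Ring.mul_inverse_cancel _ hc, one_mul, hst, one_pow, one_smul, left_eq_add,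
    smul_eq_zero_iff_right (mul_pos hs ht).ne'] at hsq
  refine sub_eq_zero.1 (eq_zero_of_star_mul_mul_eq_zero hb.ringInverse ?_)
  rwa [(ha.isSelfAdjoint.sub hb.isSelfAdjoint).star_eq]

lemma strictConvexOn_sq_mul_ringInverse_one_add :
    StrictConvexOn ℝ {z : A | IsStrictlyPositive (1 + z)}
      fun z => z ^ 2 * Ring.inverse (1 + z) := by
  have hinv : StrictConvexOn ℝ {z : A | IsStrictlyPositive (1 + z)}
      fun z => Ring.inverse (1 + z) := (strictConvexOn_ringInverse (A := A)).translate_right 1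
  have hlin : ConvexOn ℝ {z : A | IsStrictlyPositive (1 + z)} fun z => z - 1 :=
    (convexOn_id hinv.1).sub (concaveOn_const 1 hinv.1)
  exact (hlin.add_strictConvexOn hinv).congr fun z hz => (sq_mul_ringInverse_one_add hz.isUnit).symm

lemma isStrictlyPositive_one_add_of_neg_smul_one_le {ε : ℝ} (hε : ε < 1) {z : A}
    (hz : -(ε • (1 : A)) ≤ z) : IsStrictlyPositive (1 + z) := by
  have hpos : IsStrictlyPositive ((1 - ε) • (1 : A)) :=
    isStrictlyPositive_one.smul (sub_pos.2 hε)
  refine hpos.of_le ?_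
  rw [sub_smul, one_smul, sub_eq_add_neg]
  gcongr

end CStarAlgebra

section Parseval

variable {𝕜 E F ι κ : Type*} [RCLike 𝕜] [NormedAddCommGroup E] [InnerProductSpace 𝕜 E]
  [NormedAddCommGroup F] [InnerProductSpace 𝕜 F]

lemma tsum_enorm_sq_inner_hilbertBasis (b : HilbertBasis ι 𝕜 E) (x : E) :
    ∑' i, ‖⟪b i, x⟫_𝕜‖ₑ ^ 2 = ‖x‖ₑ ^ 2 := by
  have hsum : HasSum (fun i => ‖⟪b i, x⟫_𝕜‖ ^ 2) (‖x‖ ^ 2) := by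
    simpa [b.repr_apply_apply] using lp.hasSum_norm (p := 2) (by simp) (b.repr x)
  have h := ENNReal.ofReal_tsum_of_nonneg (fun _ => sq_nonneg _) hsum.summable
  simpa [hsum.tsum_eq, ENNReal.ofReal_pow] using h.symm

lemma tsum_enorm_sq_adjoint_apply_hilbertBasis [CompleteSpace E] [CompleteSpace F]
    (b : HilbertBasis ι 𝕜 E) (b' : HilbertBasis κ 𝕜 F) (T : E →L[𝕜] F) :
    ∑' j, ‖T.adjoint (b' j)‖ₑ ^ 2 = ∑' i, ‖T (b i)‖ₑ ^ 2 := by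
  simp_rw [← tsum_enorm_sq_inner_hilbertBasis b, ← tsum_enorm_sq_inner_hilbertBasis b',
    T.adjoint_inner_right]
  rw [ENNReal.tsum_comm]
  refine tsum_congr fun i => tsum_congr fun j => ?_
  rw [← ofReal_norm, ← ofReal_norm, norm_inner_symm]

end Parseval

section HilbertSchmidt

variable {H : Type*} [NormedAddCommGroup H] [InnerProductSpace ℂ H] [CompleteSpace H]

lemma opDiag_add (A B : H →L[ℂ] H) : opDiag (A + B) = opDiag A + opDiag B := by
  ext i
  simp [opDiag]

lemma opDiag_sub (A B : H →L[ℂ] H) : opDiag (A - B) = opDiag A - opDiag B := by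
  ext i
  simp [opDiag]

lemma opDiag_smul (r : ℝ) (A : H →L[ℂ] H) : opDiag (r • A) = r • opDiag A := by
  ext i
  simp [opDiag]

lemma opTrace_add {A B : H →L[ℂ] H} (hA : Summable (opDiag A)) (hB : Summable (opDiag B)) :
    opTrace (A + B) = opTrace A + opTrace B := by
  rw [opTrace, opDiag_add]
  exact hA.tsum_add hB

lemma opTrace_sub {A B : H →L[ℂ] H} (hA : Summable (opDiag A)) (hB : Summable (opDiag B)) :
    opTrace (A - B) = opTrace A - opTrace B := by
  rw [opTrace, opDiag_sub]
  exact hA.tsum_sub hB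

lemma opTrace_smul (r : ℝ) (A : H →L[ℂ] H) : opTrace (r • A) = r * opTrace A := by
  rw [opTrace, opDiag_smul]
  exact tsum_mul_left

lemma opDiag_star_mul (P Q : H →L[ℂ] H) (i) :
    opDiag (star P * Q) i = (⟪P (traceBasis H i), Q (traceBasis H i)⟫_ℂ).re := by
  rw [opDiag, mul_apply_eq_comp, ContinuousLinearMap.star_eq_adjoint,
    ContinuousLinearMap.adjoint_inner_right]

lemma opDiag_star_mul_self (A : H →L[ℂ] H) (i) :
    opDiag (star A * A) i = ‖A (traceBasis H i)‖ ^ 2 := by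
  rw [opDiag_star_mul]
  exact inner_self_eq_norm_sq (𝕜 := ℂ) _

lemma opDiag_star_mul_self_eq_toReal (A : H →L[ℂ] H) :
    opDiag (star A * A) = fun i => (‖A (traceBasis H i)‖ₑ ^ 2).toReal := by
  ext i
  simp [opDiag_star_mul_self]

lemma opTrace_star_mul_self_eq_toReal (A : H →L[ℂ] H) :
    opTrace (star A * A) = (∑' i, ‖A (traceBasis H i)‖ₑ ^ 2).toReal := by
  rw [opTrace, opDiag_star_mul_self_eq_toReal, ENNReal.tsum_toReal_eq (by simp)]

lemma opTrace_star_mul_self_comm (A : H →L[ℂ] H) :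
    opTrace (star A * A) = opTrace (A * star A) := by
  have h := opTrace_star_mul_self_eq_toReal (star A)
  rw [star_star] at h
  rw [h, opTrace_star_mul_self_eq_toReal, ContinuousLinearMap.star_eq_adjoint,
    tsum_enorm_sq_adjoint_apply_hilbertBasis (traceBasis H)]

lemma isHilbertSchmidt_iff_tsum_enorm_sq_ne_top {A : H →L[ℂ] H} :
    IsHilbertSchmidt A ↔ ∑' i, ‖A (traceBasis H i)‖ₑ ^ 2 ≠ ⊤ := by
  rw [IsHilbertSchmidt, opDiag_star_mul_self_eq_toReal]
  refine ⟨fun h => ?_, ENNReal.summable_toReal⟩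
  simpa [ENNReal.ofReal_toReal] using h.tsum_ofReal_ne_top

lemma isHilbertSchmidt_iff_memℓp {A : H →L[ℂ] H} :
    IsHilbertSchmidt A ↔ Memℓp (fun i => A (traceBasis H i)) 2 := by
  rw [IsHilbertSchmidt, memℓp_gen_iff (by simp), funext (opDiag_star_mul_self A)]
  simp

namespace IsHilbertSchmidt

variable {P Q : H →L[ℂ] H}

protected lemma add (hP : IsHilbertSchmidt P) (hQ : IsHilbertSchmidt Q) :
    IsHilbertSchmidt (P + Q) :=
  isHilbertSchmidt_iff_memℓp.2
    ((isHilbertSchmidt_iff_memℓp.1 hP).add (isHilbertSchmidt_iff_memℓp.1 hQ))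

protected lemma sub (hP : IsHilbertSchmidt P) (hQ : IsHilbertSchmidt Q) :
    IsHilbertSchmidt (P - Q) :=
  isHilbertSchmidt_iff_memℓp.2
    ((isHilbertSchmidt_iff_memℓp.1 hP).sub (isHilbertSchmidt_iff_memℓp.1 hQ))

protected lemma smul (hP : IsHilbertSchmidt P) (r : ℝ) : IsHilbertSchmidt (r • P) :=
  isHilbertSchmidt_iff_memℓp.2 ((isHilbertSchmidt_iff_memℓp.1 hP).const_smul r)

protected lemma star (hP : IsHilbertSchmidt P) : IsHilbertSchmidt (star P) := by
  rw [isHilbertSchmidt_iff_tsum_enorm_sq_ne_top] at hP ⊢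
  rwa [ContinuousLinearMap.star_eq_adjoint,
    tsum_enorm_sq_adjoint_apply_hilbertBasis (traceBasis H)]

lemma mul_left (hP : IsHilbertSchmidt P) (B : H →L[ℂ] H) : IsHilbertSchmidt (B * P) := by
  have hbound (i) : ‖(B * P) (traceBasis H i)‖ ^ 2 ≤ ‖B‖ ^ 2 * ‖P (traceBasis H i)‖ ^ 2 := by
    rw [← mul_pow]
    gcongr
    exact B.le_opNorm _
  rw [IsHilbertSchmidt, funext (opDiag_star_mul_self _)] at hP ⊢
  exact .of_nonneg_of_le (fun _ => sq_nonneg _) hbound (hP.mul_left _)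

lemma mul_right (hP : IsHilbertSchmidt P) (B : H →L[ℂ] H) : IsHilbertSchmidt (P * B) := by
  simpa using (hP.star.mul_left (star B)).star

lemma summable_opDiag_star_mul (hP : IsHilbertSchmidt P) (hQ : IsHilbertSchmidt Q) :
    Summable (opDiag (star P * Q)) := by
  rw [funext (opDiag_star_mul P Q)]
  exact Complex.reCLM.summable (lp.summable_inner (𝕜 := ℂ)
    ⟨_, isHilbertSchmidt_iff_memℓp.1 hP⟩ ⟨_, isHilbertSchmidt_iff_memℓp.1 hQ⟩)

lemma four_mul_opTrace_star_mul (hP : IsHilbertSchmidt P) (hQ : IsHilbertSchmidt Q) :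
    4 * opTrace (star P * Q)
      = opTrace (star (P + Q) * (P + Q)) - opTrace (star (P - Q) * (P - Q)) := by
  rw [← opTrace_sub (hP.add hQ) (hP.sub hQ), ← opTrace_smul, opTrace, opTrace]
  refine tsum_congr fun i => ?_
  have hpolar := re_inner_eq_norm_add_mul_self_sub_norm_sub_mul_self_div_four (𝕜 := ℂ)
    (P (traceBasis H i)) (Q (traceBasis H i))
  rw [RCLike.re_to_complex] at hpolar
  rw [opDiag_smul, opDiag_sub, Pi.smul_apply, Pi.sub_apply, opDiag_star_mul_self,
    opDiag_star_mul_self, opDiag_star_mul, hpolar, add_apply, sub_apply, smul_eq_mul]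
  ring

lemma opTrace_star_mul_comm (hP : IsHilbertSchmidt P) (hQ : IsHilbertSchmidt Q) :
    opTrace (star P * Q) = opTrace (P * star Q) := by
  have hpolar := four_mul_opTrace_star_mul hP hQ
  have hpolar' := four_mul_opTrace_star_mul hP.star hQ.star
  rw [star_star, ← star_add, ← star_sub, star_star, star_star] at hpolar'
  rw [opTrace_star_mul_self_comm, opTrace_star_mul_self_comm] at hpolar
  linarith

lemma opTrace_star_mul_self_pos (hP : IsHilbertSchmidt P) (hP0 : P ≠ 0) :
    0 < opTrace (star P * P) := by
  obtain ⟨i, hi⟩ : ∃ i, P (traceBasis H i) ≠ 0 := by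
    by_contra! hzero
    refine hP0 (ContinuousLinearMap.ext_on (s := Set.range (traceBasis H))
      (Submodule.dense_iff_topologicalClosure_eq_top.2 (traceBasis H).dense_span) ?_)
    rintro _ ⟨i, rfl⟩
    exact hzero i
  have hnonneg (j) : 0 ≤ opDiag (star P * P) j := by
    rw [opDiag_star_mul_self]
    positivity
  refine hP.tsum_pos hnonneg i ?_
  rw [opDiag_star_mul_self]
  positivity

end IsHilbertSchmidt

end HilbertSchmidt

section TraceClass

variable {H : Type*} [NormedAddCommGroup H] [InnerProductSpace ℂ H] [CompleteSpace H]

/-- Trace-class operators, encoded by duality with the bounded operators: `B * A` has a summable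
diagonal for every bounded `B`. In this form the class is visibly a linear space. -/
def IsTraceClass (A : H →L[ℂ] H) : Prop := ∀ B : H →L[ℂ] H, Summable (opDiag (B * A))

lemma IsHilbertSchmidt.isTraceClass_mul {P Q : H →L[ℂ] H} (hP : IsHilbertSchmidt P)
    (hQ : IsHilbertSchmidt Q) : IsTraceClass (P * Q) := fun B => by
  simpa [mul_assoc] using (hP.mul_left B).star.summable_opDiag_star_mul hQ

lemma IsHilbertSchmidt.isTraceClass_sq_mul {P : H →L[ℂ] H} (hP : IsHilbertSchmidt P)
    (B : H →L[ℂ] H) : IsTraceClass (P ^ 2 * B) := by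
  rw [sq, mul_assoc]
  exact hP.isTraceClass_mul (hP.mul_right B)

namespace IsTraceClass

variable {A B M : H →L[ℂ] H}

protected lemma add (hA : IsTraceClass A) (hB : IsTraceClass B) : IsTraceClass (A + B) :=
  fun C => by
    rw [mul_add, opDiag_add]
    exact (hA C).add (hB C)

protected lemma sub (hA : IsTraceClass A) (hB : IsTraceClass B) : IsTraceClass (A - B) :=
  fun C => by
    rw [mul_sub, opDiag_sub]
    exact (hA C).sub (hB C)

protected lemma smul (hA : IsTraceClass A) (r : ℝ) : IsTraceClass (r • A) := fun C => by
  rw [mul_smul_comm, opDiag_smul]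
  exact (hA C).const_smul r

lemma summable_opDiag (hA : IsTraceClass A) : Summable (opDiag A) := by
  simpa using hA 1

lemma opTrace_mul_smul_add_smul (hA : IsTraceClass A) (hB : IsTraceClass B)
    (M : H →L[ℂ] H) (s t : ℝ) :
    opTrace (M * (s • A + t • B)) = s * opTrace (M * A) + t * opTrace (M * B) := by
  rw [mul_add, opTrace_add (hA.smul s M) (hB.smul t M), mul_smul_comm, mul_smul_comm,
    opTrace_smul, opTrace_smul]

end IsTraceClass

lemma opTrace_mul_pos {M T : H →L[ℂ] H} (hM : 0 ≤ M) (hT : IsPosTraceClass T)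
    (hMT : M * T ≠ 0) : 0 < opTrace (M * T) := by
  obtain ⟨K, rfl⟩ := CStarAlgebra.nonneg_iff_eq_star_mul_self.1 hM
  obtain ⟨S, rfl⟩ := CStarAlgebra.nonneg_iff_eq_star_mul_self.1 hT.1
  have hS : IsHilbertSchmidt S := hT.2
  have hSK := hS.mul_right (star K)
  have hfactor : star K * K * (star S * S) = star (S * star K * K) * S := by
    simp [mul_assoc]
  have hcyclic : opTrace (star K * K * (star S * S))
      = opTrace (star (S * star K) * (S * star K)) := by
    rw [hfactor, (hSK.mul_right K).opTrace_star_mul_comm hS, opTrace_star_mul_self_comm]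
    simp [mul_assoc]
  rw [hcyclic]
  refine hSK.opTrace_star_mul_self_pos fun hzero => hMT ?_
  rw [hfactor, hzero, zero_mul, star_zero, zero_mul]

lemma opTrace_mul_lt_opTrace_mul {A B M : H →L[ℂ] H} (hM : 0 ≤ M)
    (hMinj : Function.Injective M) (hA : IsTraceClass A) (hB : IsTraceClass B) (hAB : A < B) :
    opTrace (M * A) < opTrace (M * B) := by
  have hpos : IsPosTraceClass (B - A) := ⟨sub_nonneg.2 hAB.le, (hB.sub hA).summable_opDiag⟩
  have hne : M * (B - A) ≠ 0 := fun hzero => (sub_pos.2 hAB).ne' <| by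
    ext x
    exact hMinj (by simpa using DFunLike.congr_fun hzero x)
  have h := opTrace_mul_pos hM hpos hne
  rwa [mul_sub, opTrace_sub (hB M) (hA M), sub_pos] at h

end TraceClass

theorem trace_energy_strictly_convex_general {H : Type*} [NormedAddCommGroup H]
    [InnerProductSpace ℂ H] [CompleteSpace H] {M : H →L[ℂ] H} (hM : 0 ≤ M)
    (hMinj : Function.Injective M) :
    StrictConvexOn ℝ {z : H →L[ℂ] H | IsHilbertSchmidt z ∧ IsStrictlyPositive (1 + z)}
      fun z => opTrace (M * z ^ 2 * Ring.inverse (1 + z)) := by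
  have hconv := strictConvexOn_sq_mul_ringInverse_one_add (A := H →L[ℂ] H)
  refine ⟨fun z hz z' hz' s t hs ht hst =>
    ⟨(hz.1.smul s).add (hz'.1.smul t), hconv.1 hz.2 hz'.2 hs ht hst⟩, ?_⟩
  rintro z ⟨hzHS, hz⟩ z' ⟨hz'HS, hz'⟩ hne s t hs ht hst
  have hf := hzHS.isTraceClass_sq_mul (Ring.inverse (1 + z))
  have hf' := hz'HS.isTraceClass_sq_mul (Ring.inverse (1 + z'))
  simp only [mul_assoc, smul_eq_mul, ← hf.opTrace_mul_smul_add_smul hf']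
  exact opTrace_mul_lt_opTrace_mul hM hMinj
    (((hzHS.smul s).add (hz'HS.smul t)).isTraceClass_sq_mul _) ((hf.smul s).add (hf'.smul t))
    (hconv.2 hz hz' hne hs ht hst)

/-- For `M ≥ c·1` self-adjoint (`c > 0`), the map
`z ↦ Tr[M z²(1+z)⁻¹]` is strictly convex on self-adjoint Hilbert–Schmidt operators
with `z ≥ −ε·1`, `ε ∈ (0,1/2)`. -/
theorem trace_energy_strictly_convex {H : Type*} [NormedAddCommGroup H]
    [InnerProductSpace ℂ H] [CompleteSpace H] (ε : ℝ) (hε : ε ∈ Set.Ioo (0 : ℝ) (1 / 2))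
    (M : H →L[ℂ] H) (c : ℝ) (hc : 0 < c) (hMsa : IsSelfAdjoint M)
    (hM : c • (1 : H →L[ℂ] H) ≤ M)
    (z z' : H →L[ℂ] H) (hz : IsSelfAdjoint z) (hz' : IsSelfAdjoint z')
    (hzHS : IsHilbertSchmidt z) (hz'HS : IsHilbertSchmidt z')
    (hzb : -(ε • (1 : H →L[ℂ] H)) ≤ z) (hz'b : -(ε • (1 : H →L[ℂ] H)) ≤ z')
    (hne : z ≠ z') (l : ℝ) (hl : l ∈ Set.Ioo (0 : ℝ) 1) :
    opTrace (M * (l • z + (1 - l) • z') ^ 2 * Ring.inverse (1 + l • z + (1 - l) • z'))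
      < l * opTrace (M * z ^ 2 * Ring.inverse (1 + z))
        + (1 - l) * opTrace (M * z' ^ 2 * Ring.inverse (1 + z')) := by
  have hMpos : IsStrictlyPositive M := (isStrictlyPositive_one.smul hc).of_le hM
  have hMinj := (ContinuousLinearMap.isUnit_iff_bijective.1 hMpos.isUnit).injective
  have hpos {x : H →L[ℂ] H} (hx : -(ε • 1) ≤ x) : IsStrictlyPositive (1 + x) :=
    isStrictlyPositive_one_add_of_neg_smul_one_le (hε.2.trans one_half_lt_one) hx
  simpa only [add_assoc, smul_eq_mul] using
    (trace_energy_strictly_convex_general hMpos.nonneg hMinj).2 ⟨hzHS, hpos hzb⟩ ⟨hz'HS, hpos hz'b⟩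
      hne hl.1 (sub_pos.2 hl.2) (add_sub_cancel l 1)
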